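/- arXiv:1505.01655 — 2 statements merged into one kernel-verified Lean document; each statement's English description precedes it below -/
import Mathlib

section
/- Let 𝔤 be a 6-dimensional real Lie algebra, let (ω, ψ₊) be a coupled SU(3)-structure on 𝔤 with coupled constant c, and let w₂ be a torsion form for it. If d(w₂) = k·ψ₊ for some k ∈ ℝ, then w₂∧w₂∧ω = (2/3)k·ω∧ω∧ω; equivalently, w₂∧w₂∧ω = 4k·Ω where Ω = (1/6)ω∧ω∧ω (so that, since a primitive form of type (1,1) satisfies w₂∧w₂∧ω = −|w₂|²·Ω for the h-norm of w₂, the proportionality factor is k = −(1/4)|w₂|²). -/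
noncomputable section

open scoped TensorProduct

/-- `Form V k` is the space of (real-valued) k-forms on `V`, i.e. alternating
k-linear maps `V × ⋯ × V → ℝ`. -/
abbrev Form (V : Type*) [AddCommGroup V] [Module ℝ V] (k : ℕ) :=
  V [⋀^Fin k]→ₗ[ℝ] ℝ

/-- Wedge product of alternating forms (determinant/shuffle convention, so that
`(e¹ ∧ e²)(e₁, e₂) = 1`). -/
noncomputable def wedge {V : Type*} [AddCommGroup V] [Module ℝ V] {k l : ℕ}
    (f : Form V k) (g : Form V l) : Form V (k + l) :=
  ((TensorProduct.lid ℝ ℝ).toLinearMap.compAlternatingMap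
    (f.domCoprod g)).domDomCongr finSumFinEquiv
/-- The Chevalley–Eilenberg differential of a 2-form, as a function of three vectors:
`dα(x,y,z) = −α([x,y],z) + α([x,z],y) − α([y,z],x)`. -/
def d2 {𝔤 : Type*} [LieRing 𝔤] [LieAlgebra ℝ 𝔤] (α : Form 𝔤 2) (x y z : 𝔤) : ℝ :=
  -α ![⁅x, y⁆, z] + α ![⁅x, z⁆, y] - α ![⁅y, z⁆, x]

/-- The Chevalley–Eilenberg differential of a 3-form, as a function of four vectors. -/
def d3 {𝔤 : Type*} [LieRing 𝔤] [LieAlgebra ℝ 𝔤] (α : Form 𝔤 3) (x y z w : 𝔤) : ℝ :=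
  -α ![⁅x, y⁆, z, w] + α ![⁅x, z⁆, y, w] - α ![⁅x, w⁆, y, z]
    - α ![⁅y, z⁆, x, w] + α ![⁅y, w⁆, x, z] - α ![⁅z, w⁆, x, y]
/-- `λ(K) = (1/6) tr(K²)`. -/
def lamOf {V : Type*} [AddCommGroup V] [Module ℝ V] (K : V →ₗ[ℝ] V) : ℝ :=
  (1 / 6 : ℝ) * LinearMap.trace ℝ V (K ∘ₗ K)

/-- `J = −K / √(−λ(K))`. -/
def Jof {V : Type*} [AddCommGroup V] [Module ℝ V] (K : V →ₗ[ℝ] V) : V →ₗ[ℝ] V :=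
  (-(Real.sqrt (-lamOf K))⁻¹) • K

/-- `K` is the endomorphism associated with the 3-form `ψ` via the volume form
`Ω = (1/6) ω³`, i.e. `i_{K v} Ω = (i_v ψ) ∧ ψ` for all `v`. -/
def IsKOf {V : Type*} [AddCommGroup V] [Module ℝ V]
    (ω : Form V 2) (ψ : Form V 3) (K : V →ₗ[ℝ] V) : Prop :=
  ∀ v : V, ((1 / 6 : ℝ) • wedge (wedge ω ω) ω).curryLeft (K v)
    = wedge (ψ.curryLeft v) ψ

/-- An SU(3)-structure `(ω, ψp)` on `V`, with associated almost complex structure `J`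
and associated 3-form `ψm` (so that `Ψ = ψp + i ψm` and `ψm(x,y,z) = −ψp(Jx,y,z)`):
`ω³ ≠ 0`, `λ(ψp) < 0`, `ω ∧ ψp = 0`, `h(x,y) := ω(x,Jy)` is symmetric and positive
definite, and `ψp ∧ ψm = (2/3) ω³`. -/
structure IsSU3 {V : Type*} [AddCommGroup V] [Module ℝ V]
    (ω : Form V 2) (ψp ψm : Form V 3) (J : V →ₗ[ℝ] V) : Prop where
  vol_ne : wedge (wedge ω ω) ω ≠ 0
  hJ : ∃ K : V →ₗ[ℝ] V, IsKOf ω ψp K ∧ lamOf K < 0 ∧ J = Jof K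
  hψm : ∀ x y z : V, ψm ![x, y, z] = -ψp ![J x, y, z]
  compat : wedge ω ψp = 0
  h_symm : ∀ x y : V, ω ![x, J y] = ω ![y, J x]
  h_posdef : ∀ x : V, x ≠ 0 → 0 < ω ![x, J x]
  normalized : wedge ψp ψm = (2 / 3 : ℝ) • wedge (wedge ω ω) ω

/-- A coupled SU(3)-structure with coupled constant `c ≠ 0`: `dω = c ψ₊`. -/
structure IsCoupledSU3 {𝔤 : Type*} [LieRing 𝔤] [LieAlgebra ℝ 𝔤]
    (ω : Form 𝔤 2) (ψp ψm : Form 𝔤 3) (J : 𝔤 →ₗ[ℝ] 𝔤) (c : ℝ) : Prop where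
  toIsSU3 : IsSU3 ω ψp ψm J
  c_ne : c ≠ 0
  coupled : ∀ x y z : 𝔤, d2 ω x y z = c * ψp ![x, y, z]

/-- `w₂` is a torsion form for the coupled SU(3)-structure `(ω, ψp)` with coupled
constant `c`: it is primitive (`w₂ ∧ ω² = 0`), of type (1,1) (`w₂(J·,J·) = w₂`), and
`dψ₋ = −(2/3) c ω² − w₂ ∧ ω`. -/
structure IsTorsionForm {𝔤 : Type*} [LieRing 𝔤] [LieAlgebra ℝ 𝔤]
    (ω : Form 𝔤 2) (ψp ψm : Form 𝔤 3) (J : 𝔤 →ₗ[ℝ] 𝔤) (c : ℝ) (w₂ : Form 𝔤 2) : Prop where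
  primitive : wedge (wedge w₂ ω) ω = 0
  type11 : ∀ x y : 𝔤, w₂ ![J x, J y] = w₂ ![x, y]
  dψm : ∀ x y z w : 𝔤, d3 ψm x y z w
    = -(2 / 3 : ℝ) * c * wedge ω ω ![x, y, z, w] - wedge w₂ ω ![x, y, z, w]

/-!
Let `D_A` denote the derivation of the exterior algebra extending `α ↦ α ∘ A` on covectors, and
let `K` be the endomorphism attached to `ψ₊`, so that `i_{Kv} Ω = (i_v ψ₊) ∧ ψ₊`. Let `φ` be the
multiple of `ψ₋` with `i_v φ = i_{Kv} ψ₊`; then `D_K ψ₊ = 3 φ`, and the normalization reads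
`ψ₊ ∧ φ = r Ω`. Symmetry of `h` gives `D_K Ω = 0`. Applying `D_K` to `(i_v ψ₊) ∧ ψ₊` and contracting
`ψ₊ ∧ φ = r Ω` with `v` then gives `K² = -(r/2)`. Comparing with the trace in the definition of `λ`
forces `√(-λ) = 2`, whence `J² = -1`.

On 5-forms `i_u Ω` one has `D_J² = -1`, whereas `D_J w₂ = 0` and `D_J ψ₋ = 3 ψ₊`,
`D_J ψ₊ = -3 ψ₋` give `D_J² (w₂ ∧ ψ₋) = -9 w₂ ∧ ψ₋`. Hence `w₂ ∧ ψ₋ = 0`, and by the Leibniz rule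
`0 = d(w₂ ∧ ψ₋) = k ψ₊ ∧ ψ₋ + w₂ ∧ dψ₋`. As `w₂ ∧ ω ∧ ω = 0`, the last term is `-w₂ ∧ w₂ ∧ ω`.
-/

section InsertNth

open Equiv Function

variable {α : Type*} {k l : ℕ}

theorem sum_perm_sign_smul_cons {V M : Type*} [AddCommGroup M] {n : ℕ}
    (F : (Fin (n + 1) → V) → M) (x : V) (v : Fin n → V) :
    ∑ σ : Perm (Fin (n + 1)), Perm.sign σ • F (Matrix.vecCons x v ∘ σ) =
      ∑ p : Fin (n + 1), (-1 : ℤ) ^ (p : ℕ) •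
        ∑ τ : Perm (Fin n), Perm.sign τ • F (p.insertNth x (v ∘ τ)) := by
  let e (pτ : Fin (n + 1) × Perm (Fin n)) : Perm (Fin (n + 1)) :=
    Perm.decomposeFin.symm (0, pτ.2) * pτ.1.cycleRange
  have e_inj : Injective e := by
    rintro ⟨p, τ⟩ ⟨q, ρ⟩ h
    have hpq : p = q := by
      have hp : e (p, τ) p = 0 := by simp [e]
      have hq : e (q, ρ) q = 0 := by simp [e]
      exact (e (p, τ)).injective (hp.trans (by rw [h, hq]))
    subst hpq
    simpa [e] using h
  have e_bij : Bijective e := (Fintype.bijective_iff_injective_and_card e).2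
    ⟨e_inj, by simp [Fintype.card_perm, Nat.factorial_succ]⟩
  have e_apply (p : Fin (n + 1)) (τ : Perm (Fin n)) :
      Matrix.vecCons x v ∘ e (p, τ) = p.insertNth x (v ∘ τ) := by
    refine Fin.eq_insertNth_iff.2 ⟨?_, ?_⟩
    · simp [e]
    · ext i
      simp [e, Fin.removeNth]
  rw [← e_bij.sum_comp, Fintype.sum_prod_type]
  refine Finset.sum_congr rfl fun p _ => ?_
  rw [Finset.smul_sum]
  refine Finset.sum_congr rfl fun τ _ => ?_
  rw [e_apply, smul_comm]
  simp [e, Units.smul_def, mul_smul]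

theorem insertNth_castAdd_comp_castAdd (p : Fin (k + 1)) (x : α) (w : Fin (k + 1 + l) → α) :
    (Fin.castAdd (l + 1) p).insertNth x w ∘ Fin.castAdd (l + 1) =
      p.insertNth x (w ∘ Fin.cast (Nat.add_right_comm k l 1) ∘ Fin.castAdd (l + 1)) := by
  refine Fin.eq_insertNth_iff.2 ⟨by simp, funext fun j => ?_⟩
  have h : Fin.castAdd (l + 1) (p.succAbove j) = (Fin.castAdd (l + 1) p).succAbove
      (Fin.cast (Nat.add_right_comm k l 1) (Fin.castAdd (l + 1) j)) := by
    simp only [Fin.ext_iff, Fin.succAbove, Fin.lt_def]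
    grind
  simp only [Fin.removeNth, comp_apply, h]
  exact Fin.insertNth_apply_succAbove (α := fun _ => α) _ x w _

theorem insertNth_castAdd_comp_natAdd (p : Fin (k + 1)) (x : α) (w : Fin (k + 1 + l) → α) :
    (Fin.castAdd (l + 1) p).insertNth x w ∘ Fin.natAdd (k + 1) =
      w ∘ Fin.cast (Nat.add_right_comm k l 1) ∘ Fin.natAdd (m := l + 1) k := by
  refine funext fun j => ?_
  have h : Fin.natAdd (k + 1) j = (Fin.castAdd (l + 1) p).succAbove
      (Fin.cast (Nat.add_right_comm k l 1) (Fin.natAdd k j)) := by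
    simp only [Fin.ext_iff, Fin.succAbove, Fin.lt_def]
    grind
  simp only [comp_apply, h]
  exact Fin.insertNth_apply_succAbove (α := fun _ => α) _ x w _

theorem insertNth_natAdd_comp_castAdd (q : Fin (l + 1)) (x : α) (w : Fin (k + l) → α) :
    (Fin.natAdd k q).insertNth x w ∘ Fin.castAdd (l + 1) = w ∘ Fin.castAdd l := by
  refine funext fun j => ?_
  have h : Fin.castAdd (l + 1) j = (Fin.natAdd k q).succAbove (Fin.castAdd l j) := by
    simp only [Fin.ext_iff, Fin.succAbove, Fin.lt_def]
    grind
  simp only [comp_apply, h]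
  exact Fin.insertNth_apply_succAbove (α := fun _ => α) _ x w _

theorem insertNth_natAdd_comp_natAdd (q : Fin (l + 1)) (x : α) (w : Fin (k + l) → α) :
    (Fin.natAdd k q).insertNth x w ∘ Fin.natAdd k = q.insertNth x (w ∘ Fin.natAdd k) := by
  refine Fin.eq_insertNth_iff.2 ⟨by simp, funext fun j => ?_⟩
  have h : Fin.natAdd k (q.succAbove j) = (Fin.natAdd k q).succAbove (Fin.natAdd k j) := by
    simp only [Fin.ext_iff, Fin.succAbove, Fin.lt_def]
    grind
  simp only [Fin.removeNth, comp_apply, h]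
  exact Fin.insertNth_apply_succAbove (α := fun _ => α) _ x w _

theorem vecCons_comp_cast {m n : ℕ} (h : m + 1 = n + 1) (x : α) (v : Fin n → α) :
    Matrix.vecCons x v ∘ Fin.cast h = Matrix.vecCons x (v ∘ Fin.cast (Nat.succ.inj h)) := by
  obtain rfl := Nat.succ.inj h
  rfl

end InsertNth

section Wedge

open Equiv Function

variable {V : Type*} [AddCommGroup V] [Module ℝ V] {k l : ℕ}

theorem factorial_mul_wedge_apply (f : Form V k) (g : Form V l) (v : Fin (k + l) → V) :
    (k.factorial * l.factorial : ℝ) * wedge f g v =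
      ∑ σ : Perm (Fin (k + l)), Perm.sign σ •
        (f (v ∘ σ ∘ Fin.castAdd l) * g (v ∘ σ ∘ Fin.natAdd k)) := by
  have h := congrArg (fun A => TensorProduct.lid ℝ ℝ (A (v ∘ finSumFinEquiv)))
    (MultilinearMap.domCoprod_alternization_eq f g)
  simp only [MultilinearMap.alternatization_apply, map_sum, Fintype.card_fin,
    AlternatingMap.smul_apply, map_nsmul] at h
  rw [nsmul_eq_mul, Nat.cast_mul] at h
  refine Eq.trans h.symm ?_
  rw [← (finSumFinEquiv (m := k) (n := l)).permCongr.sum_comp]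
  refine Finset.sum_congr rfl fun σ _ => ?_
  rw [Perm.sign_permCongr, Units.smul_def, Units.smul_def, map_zsmul]
  congr 1
  simp [Function.comp_def, MultilinearMap.domCoprod_apply]

theorem wedge_smul_right (c : ℝ) (f : Form V k) (g : Form V l) :
    wedge f (c • g) = c • wedge f g := by
  ext v
  simp [wedge, ← AlternatingMap.domCoprod'_apply, TensorProduct.tmul_smul]

theorem wedge_smul_left (c : ℝ) (f : Form V k) (g : Form V l) :
    wedge (c • f) g = c • wedge f g := by
  ext v
  simp [wedge, ← AlternatingMap.domCoprod'_apply, ← TensorProduct.smul_tmul']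

theorem wedge_add_left (f₁ f₂ : Form V k) (g : Form V l) :
    wedge (f₁ + f₂) g = wedge f₁ g + wedge f₂ g := by
  simp only [wedge, ← AlternatingMap.domCoprod'_apply, TensorProduct.add_tmul, map_add,
    LinearMap.compAlternatingMap_add, AlternatingMap.domDomCongr_add]

theorem wedge_add_right (f : Form V k) (g₁ g₂ : Form V l) :
    wedge f (g₁ + g₂) = wedge f g₁ + wedge f g₂ := by
  simp only [wedge, ← AlternatingMap.domCoprod'_apply, TensorProduct.tmul_add, map_add,
    LinearMap.compAlternatingMap_add, AlternatingMap.domDomCongr_add]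

theorem wedge_zero_left (g : Form V l) : wedge (0 : Form V k) g = 0 := by
  simpa using wedge_smul_left 0 (0 : Form V k) g

theorem wedge_zero_right (f : Form V k) : wedge f (0 : Form V l) = 0 := by
  simpa using wedge_smul_right 0 f (0 : Form V l)

theorem wedge_apply_degree_zero_left (f : Form V 0) (g : Form V l) (v : Fin (0 + l) → V) :
    wedge f g v = f ![] * g (v ∘ Fin.natAdd 0) := by
  let e : Fin l ≃ Fin (0 + l) := finCongr (Nat.zero_add l).symm
  have he : Fin.natAdd 0 = e := by ext; simp [e]
  have h_term (σ : Perm (Fin (0 + l))) : Perm.sign σ •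
      (f (v ∘ σ ∘ Fin.castAdd l) * g (v ∘ σ ∘ Fin.natAdd 0)) = f ![] * g (v ∘ e) := by
    have h_perm := (g.domDomCongr e).map_perm v σ
    rw [Subsingleton.elim (v ∘ σ ∘ Fin.castAdd l) ![], he, mul_comm (f _), ← smul_mul_assoc,
      mul_comm (f _)]
    simp only [AlternatingMap.domDomCongr_apply] at h_perm
    rw [← Function.comp_assoc, h_perm, smul_smul, Int.units_mul_self, one_smul]
  have h := factorial_mul_wedge_apply f g v
  simp only [h_term, Finset.sum_const, Finset.card_univ, Fintype.card_perm, Fintype.card_fin,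
    nsmul_eq_mul, zero_add, Nat.factorial_zero, Nat.cast_one, one_mul] at h
  rw [he]
  exact mul_left_cancel₀ (by positivity) h

theorem wedge_apply_degree_zero_right (f : Form V k) (g : Form V 0) (v : Fin k → V) :
    wedge f g v = f v * g ![] := by
  have h_term (σ : Perm (Fin k)) : Perm.sign σ •
      (f (v ∘ σ ∘ Fin.castAdd 0) * g (v ∘ σ ∘ Fin.natAdd k)) = f v * g ![] := by
    rw [Subsingleton.elim (v ∘ σ ∘ Fin.natAdd k) ![], ← smul_mul_assoc]
    refine congrArg (· * g ![]) ?_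
    change Perm.sign σ • f (v ∘ σ) = f v
    rw [f.map_perm, smul_smul, Int.units_mul_self, one_smul]
  have h := factorial_mul_wedge_apply f g v
  simp only [Nat.add_zero, h_term, Finset.sum_const, Finset.card_univ, Fintype.card_perm,
    Fintype.card_fin, nsmul_eq_mul, Nat.factorial_zero, Nat.cast_one, mul_one] at h
  exact mul_left_cancel₀ (by positivity) h

theorem sum_perm_insertNth_castAdd (f : Form V (k + 1)) (g : Form V (l + 1)) (x : V)
    (v : Fin (k + 1 + l) → V) (p : Fin (k + 1)) :
    (-1 : ℤ) ^ (p : ℕ) •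
    ∑ τ : Perm (Fin (k + 1 + l)), Perm.sign τ •
    (f ((Fin.castAdd (l + 1) p).insertNth x (v ∘ τ) ∘ Fin.castAdd (l + 1)) *
      g ((Fin.castAdd (l + 1) p).insertNth x (v ∘ τ) ∘ Fin.natAdd (k + 1))) =
    k.factorial * (l + 1).factorial *
      wedge (f.curryLeft x) g (v ∘ Fin.cast (Nat.add_right_comm k l 1)) := by
  rw [factorial_mul_wedge_apply,
    ← (finCongr (Nat.add_right_comm k l 1)).permCongr.sum_comp, Finset.smul_sum]
  refine Finset.sum_congr rfl fun τ _ => ?_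
  rw [insertNth_castAdd_comp_castAdd, insertNth_castAdd_comp_natAdd,
    smul_comm, ← smul_mul_assoc, AlternatingMap.neg_one_pow_smul_map_insertNth,
    Perm.sign_permCongr]
  rfl

theorem sum_perm_insertNth_natAdd (f : Form V (k + 1)) (g : Form V (l + 1)) (x : V)
    (v : Fin (k + 1 + l) → V) (q : Fin (l + 1)) :
    (-1 : ℤ) ^ (k + 1 + q : ℕ) •
    ∑ τ : Perm (Fin (k + 1 + l)), Perm.sign τ •
    (f ((Fin.natAdd (k + 1) q).insertNth x (v ∘ τ) ∘ Fin.castAdd (l + 1)) *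
      g ((Fin.natAdd (k + 1) q).insertNth x (v ∘ τ) ∘ Fin.natAdd (k + 1))) =
    (k + 1).factorial * l.factorial * ((-1) ^ (k + 1) * wedge f (g.curryLeft x) v) := by
  rw [mul_left_comm, factorial_mul_wedge_apply, Finset.smul_sum, Finset.mul_sum]
  refine Finset.sum_congr rfl fun τ _ => ?_
  rw [insertNth_natAdd_comp_castAdd, insertNth_natAdd_comp_natAdd,
    pow_add, mul_smul, smul_comm _ (Perm.sign τ), ← mul_smul_comm ((-1) ^ (q : ℕ)),
    AlternatingMap.neg_one_pow_smul_map_insertNth, smul_comm _ (Perm.sign τ), zsmul_eq_mul,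
    ← mul_smul_comm]
  push_cast
  rfl

theorem wedge_apply_vecCons (f : Form V (k + 1)) (g : Form V (l + 1)) (x : V)
    (v : Fin (k + 1 + l) → V) :
    wedge f g (Matrix.vecCons x v) =
      wedge (f.curryLeft x) g (v ∘ Fin.cast (Nat.add_right_comm k l 1)) +
        (-1) ^ (k + 1) * wedge f (g.curryLeft x) v := by
  have h := factorial_mul_wedge_apply f g (Matrix.vecCons x v)
  have h_sum := sum_perm_sign_smul_cons
    (fun u => f (u ∘ Fin.castAdd (l + 1)) * g (u ∘ Fin.natAdd (k + 1))) x v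
  have h_split := h.trans (h_sum.trans ((Fin.sum_univ_add (a := k + 1) (b := l + 1) _).trans
    (congrArg₂ (· + ·) (Finset.sum_congr rfl fun p _ => sum_perm_insertNth_castAdd f g x v p)
      (Finset.sum_congr rfl fun q _ => sum_perm_insertNth_natAdd f g x v q))))
  simp only [Finset.sum_const, Finset.card_univ, Fintype.card_fin, nsmul_eq_mul,
    Nat.factorial_succ, Nat.cast_mul] at h_split
  refine mul_left_cancel₀ (a := ((k + 1 : ℕ) * k.factorial * ((l + 1 : ℕ) * l.factorial) : ℝ))
    (by positivity) ?_
  linear_combination h_split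

theorem wedge_comm_apply : ∀ {k l : ℕ} (f : Form V k) (g : Form V l) (v : Fin (k + l) → V),
    wedge f g v = (-1) ^ (k * l) * wedge g f (v ∘ Fin.cast (Nat.add_comm l k))
  | 0, l, f, g, v => by
    rw [wedge_apply_degree_zero_left, wedge_apply_degree_zero_right, Nat.zero_mul,
      pow_zero, one_mul, mul_comm]
    congr 3
    ext i
    simp
  | k + 1, 0, f, g, v => by
    rw [wedge_apply_degree_zero_left, wedge_apply_degree_zero_right, Nat.mul_zero,
      pow_zero, one_mul, mul_comm]
    congr 2
    ext i
    simp
  | k + 1, l + 1, f, g, v => by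
    obtain ⟨x, v, rfl⟩ : ∃ x w, v = Matrix.vecCons x w := ⟨_, _, (Matrix.cons_head_tail v).symm⟩
    have h_fg := wedge_apply_vecCons f g x v
    have h_gf := wedge_apply_vecCons g f x (v ∘ Fin.cast (show l + 1 + k = k + 1 + l by omega))
    have h_left := wedge_comm_apply (f.curryLeft x) g (v ∘ Fin.cast (Nat.add_right_comm k l 1))
    have h_right := wedge_comm_apply f (g.curryLeft x) v
    have h_sign : ((-1 : ℝ) ^ (l + 1)) ^ 2 = 1 := by simp [← pow_mul]
    rw [vecCons_comp_cast, h_gf]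
    refine h_fg.trans ?_
    rw [h_left, h_right]
    simp only [comp_def, Fin.cast_cast]
    linear_combination (-(-1) ^ (k * (l + 1)) * wedge g (f.curryLeft x)
      fun i => v (Fin.cast (show l + 1 + k = k + 1 + l by omega) i)) * h_sign
termination_by k l => k + l

theorem curryLeft_wedge (f : Form V (k + 1)) (g : Form V (l + 1)) (x : V) :
    (wedge f g).curryLeft x =
      (wedge (f.curryLeft x) g).domDomCongr (finCongr (show k + (l + 1) = k + 1 + l by omega)) +
        (-1 : ℝ) ^ (k + 1) • wedge f (g.curryLeft x) :=
  AlternatingMap.ext fun v => wedge_apply_vecCons f g x v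

theorem wedge_finCongr_left {k' : ℕ} (h : k = k') (f : Form V k) (g : Form V l)
    (v : Fin (k' + l) → V) :
    wedge (f.domDomCongr (finCongr h)) g v =
      wedge f g (v ∘ Fin.cast (show k + l = k' + l by rw [h])) := by
  subst h
  rfl

theorem wedge_finCongr_right {l' : ℕ} (h : l = l') (f : Form V k) (g : Form V l)
    (v : Fin (k + l') → V) :
    wedge f (g.domDomCongr (finCongr h)) v =
      wedge f g (v ∘ Fin.cast (show k + l = k + l' by rw [h])) := by
  subst h
  rfl

theorem wedge_degree_zero_left (f : Form V 0) (g : Form V l) :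
    wedge f g = f ![] • g.domDomCongr (finCongr (Nat.zero_add l).symm) := by
  ext v
  rw [wedge_apply_degree_zero_left, AlternatingMap.smul_apply, smul_eq_mul,
    AlternatingMap.domDomCongr_apply]
  congr 2
  ext i
  simp

theorem wedge_degree_zero_right (f : Form V k) (g : Form V 0) : wedge f g = g ![] • f := by
  ext v
  exact (wedge_apply_degree_zero_right f g v).trans (mul_comm _ _)

theorem wedge_assoc_apply : ∀ {k l m : ℕ} (f : Form V k) (g : Form V l) (h : Form V m)
    (v : Fin (k + l + m) → V),
    wedge (wedge f g) h v = wedge f (wedge g h) (v ∘ Fin.cast (Nat.add_assoc k l m).symm)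
  | 0, l, m, f, g, h, v => by
    rw [wedge_degree_zero_left, wedge_degree_zero_left, wedge_smul_left, AlternatingMap.smul_apply,
      wedge_finCongr_left, AlternatingMap.smul_apply]
    rfl
  | k + 1, 0, m, f, g, h, v => by
    rw [wedge_degree_zero_right, wedge_degree_zero_left, wedge_smul_left, wedge_smul_right,
      AlternatingMap.smul_apply, AlternatingMap.smul_apply, wedge_finCongr_right]
    rfl
  | k + 1, l + 1, 0, f, g, h, v => by
    rw [wedge_degree_zero_right, wedge_degree_zero_right, wedge_smul_right]
    rfl
  | k + 1, l + 1, m + 1, f, g, h, v => by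
    obtain ⟨x, v, rfl⟩ : ∃ (x : V) (w : Fin (k + 1 + l + 1 + m) → V), v = Matrix.vecCons x w :=
      ⟨_, _, (Matrix.cons_head_tail v).symm⟩
    have h_l := wedge_apply_vecCons (k := k + 1 + l) (wedge f g :) h x v
    have h_r := wedge_apply_vecCons (l := l + 1 + m) f (wedge g h :) x
      (v ∘ Fin.cast (show k + 1 + (l + 1 + m) = k + 1 + l + 1 + m by omega))
    have h_f := wedge_assoc_apply (f.curryLeft x) g h (v ∘ Fin.cast (by omega))
    have h_g := wedge_assoc_apply f (g.curryLeft x) h (v ∘ Fin.cast (by omega))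
    have h_h := wedge_assoc_apply f g (h.curryLeft x) v
    rw [curryLeft_wedge, wedge_add_left, AlternatingMap.add_apply, wedge_smul_left,
      wedge_finCongr_left, AlternatingMap.smul_apply] at h_l
    rw [curryLeft_wedge, wedge_add_right, AlternatingMap.add_apply, wedge_smul_right,
      wedge_finCongr_right, AlternatingMap.smul_apply] at h_r
    rw [vecCons_comp_cast]
    simp only [comp_def, Fin.cast_cast, smul_eq_mul] at h_l h_r h_f h_g h_h ⊢
    refine h_l.trans (Eq.trans ?_ h_r.symm)
    linear_combination h_f + (-1) ^ (k + 1) * h_g + (-1) ^ (k + 1 + l + 1) * h_h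
termination_by k l m => k + l + m

end Wedge

section DerivationAction

open Equiv Function

variable {V : Type*} [AddCommGroup V] [Module ℝ V] {k l n : ℕ}

theorem apply_vecCons_vecCons_swap (α : Form V (n + 2)) (x y : V) (v : Fin n → V) :
    α (Matrix.vecCons x (Matrix.vecCons y v)) = -α (Matrix.vecCons y (Matrix.vecCons x v)) := by
  rw [← α.map_swap _ (zero_ne_one' (Fin (n + 2)))]
  congr 1
  ext i
  refine Fin.cases ?_ (fun j => Fin.cases ?_ (fun m => ?_) j) i
  · simp
  · simp
  · rw [comp_apply, swap_apply_of_ne_of_ne (Fin.succ_ne_zero _) (by simp [Fin.ext_iff])]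
    rfl

theorem update_id_apply (K : V →ₗ[ℝ] V) (v : Fin k → V) (i : Fin k) :
    (fun j => update (fun _ => LinearMap.id) i K j (v j)) = update v i (K (v i)) := by
  ext j
  obtain rfl | hj := eq_or_ne j i <;> simp [*]

/-- The derivation of the exterior algebra of forms induced by an endomorphism `K`:
`(D_K α)(v₁, …, v_k) = ∑ᵢ α(v₁, …, K vᵢ, …, v_k)`. This is minus the usual `𝔤𝔩(V)`-action. -/
def derivationAction (K : V →ₗ[ℝ] V) (α : Form V k) : Form V k where
  toMultilinearMap := ∑ i, α.toMultilinearMap.compLinearMap (update (fun _ => LinearMap.id) i K)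
  map_eq_zero_of_eq' v i j hij hne := by
    simp only [MultilinearMap.toFun_eq_coe, sum_apply,
      MultilinearMap.compLinearMap_apply, update_id_apply, AlternatingMap.coe_multilinearMap]
    rw [Finset.sum_eq_add i j hne _ (by simp) (by simp)]
    · have h_swap : update v i (K (v i)) ∘ swap i j = update v j (K (v j)) := by
        rw [update_comp_equiv, hij, symm_swap, swap_apply_left]
        congr 1
        ext m
        grind
      rw [← h_swap, α.map_swap _ hne, add_neg_cancel]
    · intro m _ hm
      exact α.map_eq_zero_of_eq _ (by simp [hm.1.symm, hm.2.symm, hij]) hne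

theorem derivationAction_apply (K : V →ₗ[ℝ] V) (α : Form V k) (v : Fin k → V) :
    derivationAction K α v = ∑ i, α (update v i (K (v i))) := by
  simp [derivationAction, ← AlternatingMap.coe_multilinearMap, update_id_apply]

theorem derivationAction_smul_left (c : ℝ) (K : V →ₗ[ℝ] V) (α : Form V k) :
    derivationAction (c • K) α = c • derivationAction K α := by
  ext v
  simp [derivationAction_apply, Finset.mul_sum]

theorem derivationAction_smul_right (K : V →ₗ[ℝ] V) (c : ℝ) (α : Form V k) :
    derivationAction K (c • α) = c • derivationAction K α := by
  ext v
  simp [derivationAction_apply, Finset.mul_sum]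

theorem derivationAction_add (K : V →ₗ[ℝ] V) (α β : Form V k) :
    derivationAction K (α + β) = derivationAction K α + derivationAction K β := by
  ext v
  simp [derivationAction_apply, Finset.sum_add_distrib]

theorem derivationAction_wedge (K : V →ₗ[ℝ] V) (f : Form V k) (g : Form V l) :
    derivationAction K (wedge f g) =
      wedge (derivationAction K f) g + wedge f (derivationAction K g) := by
  ext v
  refine mul_left_cancel₀ (a := (k.factorial * l.factorial : ℝ)) (by positivity) ?_
  rw [AlternatingMap.add_apply, mul_add, factorial_mul_wedge_apply, factorial_mul_wedge_apply,
    derivationAction_apply, Finset.mul_sum]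
  simp only [factorial_mul_wedge_apply]
  rw [Finset.sum_comm, ← Finset.sum_add_distrib]
  refine Finset.sum_congr rfl fun σ _ => ?_
  rw [← Finset.smul_sum, ← Equiv.sum_comp σ, Fin.sum_univ_add, ← smul_add, derivationAction_apply,
    derivationAction_apply, Finset.sum_mul, Finset.mul_sum]
  congr 2
  · refine Finset.sum_congr rfl fun a _ => ?_
    have h_inj := σ.injective.comp (Fin.castAdd_injective k l)
    have h_ne (b : Fin l) : (σ ∘ Fin.natAdd k) b ≠ σ (Fin.castAdd l a) :=
      σ.injective.ne (Fin.ne_of_val_ne (by grind))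
    rw [← update_comp_eq_of_injective v h_inj, update_comp_eq_of_forall_ne _ _ h_ne]
    rfl
  · refine Finset.sum_congr rfl fun b _ => ?_
    have h_inj := σ.injective.comp (Fin.natAdd_injective l k)
    have h_ne (a : Fin k) : (σ ∘ Fin.castAdd l) a ≠ σ (Fin.natAdd k b) :=
      σ.injective.ne (Fin.ne_of_val_ne (by grind))
    rw [← update_comp_eq_of_injective v h_inj, update_comp_eq_of_forall_ne _ _ h_ne]
    rfl

theorem curryLeft_derivationAction (K : V →ₗ[ℝ] V) (α : Form V (n + 1)) (x : V) :
    (derivationAction K α).curryLeft x =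
      derivationAction K (α.curryLeft x) + α.curryLeft (K x) := by
  ext v
  simp [derivationAction_apply, Fin.sum_univ_succ, Matrix.vecCons, add_comm]

theorem derivationAction_vecCons (K : V →ₗ[ℝ] V) (α : Form V (n + 1)) (x : V) (v : Fin n → V) :
    derivationAction K α (Matrix.vecCons x v) =
      derivationAction K (α.curryLeft x) v + α (Matrix.vecCons (K x) v) :=
  DFunLike.congr_fun (curryLeft_derivationAction K α x) v

theorem derivationAction_degree_zero (K : V →ₗ[ℝ] V) (α : Form V 0) :
    derivationAction K α = 0 := by
  ext v
  simp [derivationAction_apply]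

theorem derivationAction_eq_smul_of_curryLeft {K : V →ₗ[ℝ] V} {φ ψ : Form V (n + 1)}
    (h : ∀ v, φ.curryLeft v = ψ.curryLeft (K v)) :
    derivationAction K ψ = (n + 1 : ℝ) • φ := by
  have h_slot (v : Fin (n + 1) → V) (i : Fin (n + 1)) : ψ (update v i (K (v i))) = φ v := by
    have hi := DFunLike.congr_fun (h (v i)) (i.removeNth v)
    simp only [AlternatingMap.curryLeft_apply_apply] at hi
    rw [← Fin.insertNth_removeNth, AlternatingMap.map_insertNth, ← hi,
      ← AlternatingMap.map_insertNth, Fin.insertNth_self_removeNth]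
  ext v
  simp [derivationAction_apply, h_slot]

end DerivationAction

section TopForms

open Function

variable {V : Type*} [AddCommGroup V] [Module ℝ V] {n : ℕ}

theorem eq_zero_of_curryLeft_eq_zero (hdim : Module.finrank ℝ V = n + 1) {Ω : Form V (n + 1)}
    (hΩ : Ω ≠ 0) {u : V} (hu : Ω.curryLeft u = 0) : u = 0 := by
  have : FiniteDimensional ℝ V := Module.finite_of_finrank_pos (by omega)
  let b : Module.Basis (Fin (n + 1)) ℝ V := Module.finBasisOfFinrankEq ℝ V hdim
  have hb : Ω b ≠ 0 := Ω.map_basis_ne_zero_iff b |>.2 hΩ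
  have h_coord (i : Fin (n + 1)) : Ω (update b i u) = b.repr u i * Ω b := by
    conv_lhs => rw [← b.sum_repr u]
    rw [AlternatingMap.map_update_sum, Finset.sum_eq_single i _ (by simp)]
    · rw [AlternatingMap.map_update_smul, update_eq_self, smul_eq_mul]
    · intro j _ hj
      rw [AlternatingMap.map_update_smul, AlternatingMap.map_update_self _ _ hj.symm, smul_zero]
  have h_update (i : Fin (n + 1)) : Ω (update b i u) = 0 := by
    rw [← Fin.insertNth_removeNth, AlternatingMap.map_insertNth,
      ← AlternatingMap.curryLeft_apply_apply, hu, AlternatingMap.zero_apply, smul_zero]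
  refine b.ext_elem fun i => ?_
  simpa [h_update, hb] using (h_coord i).symm

theorem exists_curryLeft_eq (hdim : Module.finrank ℝ V = n + 1) {Ω : Form V (n + 1)}
    (hΩ : Ω ≠ 0) (A : Form V n) : ∃ u, Ω.curryLeft u = A := by
  have : FiniteDimensional ℝ V := Module.finite_of_finrank_pos (by omega)
  have h_finrank : Module.finrank ℝ V = Module.finrank ℝ (Form V n) := by
    rw [exteriorPower.alternatingMapLinearEquiv.finrank_eq, Subspace.dual_finrank_eq,
      exteriorPower.finrank_eq, hdim, Nat.choose_succ_self_right]
  have : FiniteDimensional ℝ (Form V n) :=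
    Module.Finite.equiv exteriorPower.alternatingMapLinearEquiv.symm
  exact (LinearMap.injective_iff_surjective_of_finrank_eq_finrank h_finrank).1
    ((injective_iff_map_eq_zero _).2 fun u hu => eq_zero_of_curryLeft_eq_zero hdim hΩ hu) A

theorem derivationAction_derivationAction (hdim : Module.finrank ℝ V = n + 1)
    {J : V →ₗ[ℝ] V} (hJ : ∀ v, J (J v) = -v) {Ω : Form V (n + 1)} (hΩ : Ω ≠ 0)
    (hJΩ : derivationAction J Ω = 0) (A : Form V n) :
    derivationAction J (derivationAction J A) = -A := by
  have h_curry (u : V) : derivationAction J (Ω.curryLeft u) = -Ω.curryLeft (J u) := by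
    have h := curryLeft_derivationAction J Ω u
    rw [hJΩ, AlternatingMap.curryLeft_zero] at h
    exact eq_neg_of_add_eq_zero_left h.symm
  obtain ⟨u, rfl⟩ := exists_curryLeft_eq hdim hΩ A
  rw [h_curry, ← map_neg Ω.curryLeft, h_curry, map_neg J, hJ, neg_neg]

end TopForms

section Leibniz

variable {𝔤 : Type*} [LieRing 𝔤] [LieAlgebra ℝ 𝔤]

/-- The Chevalley–Eilenberg differential of a form of any degree, extending `d2` and `d3`. It is
defined by recursion on the degree through Cartan's formula `i_x ∘ d = L_x - d ∘ i_x`, with Lie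
derivative `L_x = -D_{ad x}`, as a bare function of its arguments: alternation is not needed. -/
def ceDiff : ∀ {n : ℕ}, Form 𝔤 n → (Fin (n + 1) → 𝔤) → ℝ
  | 0, _, _ => 0
  | _ + 1, α, v => -derivationAction (LieAlgebra.ad ℝ 𝔤 (v 0)) α (Matrix.vecTail v) -
      ceDiff (α.curryLeft (v 0)) (Matrix.vecTail v)

theorem ceDiff_vecCons {n : ℕ} (α : Form 𝔤 (n + 1)) (x : 𝔤) (v : Fin (n + 1) → 𝔤) :
    ceDiff α (Matrix.vecCons x v) =
      -derivationAction (LieAlgebra.ad ℝ 𝔤 x) α v - ceDiff (α.curryLeft x) v := by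
  simp [ceDiff]

theorem ceDiff_two (α : Form 𝔤 2) (x y z : 𝔤) : ceDiff α ![x, y, z] = d2 α x y z := by
  simp only [ceDiff_vecCons, derivationAction_vecCons, derivationAction_degree_zero]
  simp only [AlternatingMap.zero_apply, Nat.reduceAdd, LieAlgebra.ad_apply,
    AlternatingMap.curryLeft_apply_apply, Nat.succ_eq_add_one, zero_add, neg_add_rev, ceDiff,
    sub_zero, sub_neg_eq_add]
  have h_xz := apply_vecCons_vecCons_swap α y ⁅x, z⁆ ![]
  have h_yz := apply_vecCons_vecCons_swap α x ⁅y, z⁆ ![]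
  rw [d2]
  linear_combination -h_xz + h_yz

theorem ceDiff_three (α : Form 𝔤 3) (x y z w : 𝔤) : ceDiff α ![x, y, z, w] = d3 α x y z w := by
  simp only [ceDiff, Nat.reduceAdd, Fin.isValue, Matrix.cons_val_zero, Matrix.tail_cons,
    derivationAction_vecCons, derivationAction_degree_zero, AlternatingMap.zero_apply,
    LieAlgebra.ad_apply, AlternatingMap.curryLeft_apply_apply, Nat.succ_eq_add_one, zero_add,
    neg_add_rev, sub_zero, sub_neg_eq_add]
  have h_xz := apply_vecCons_vecCons_swap α y ⁅x, z⁆ ![w]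
  have h_xw := apply_vecCons_vecCons_swap (α.curryLeft y) z ⁅x, w⁆ ![]
  have h_xw' := apply_vecCons_vecCons_swap α y ⁅x, w⁆ ![z]
  have h_yz := apply_vecCons_vecCons_swap α x ⁅y, z⁆ ![w]
  have h_yw := apply_vecCons_vecCons_swap (α.curryLeft x) z ⁅y, w⁆ ![]
  have h_yw' := apply_vecCons_vecCons_swap α x ⁅y, w⁆ ![z]
  have h_zw := apply_vecCons_vecCons_swap (α.curryLeft x) y ⁅z, w⁆ ![]
  have h_zw' := apply_vecCons_vecCons_swap α x ⁅z, w⁆ ![y]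
  simp only [AlternatingMap.curryLeft_apply_apply] at h_xw h_yw h_zw
  rw [d3]
  linear_combination -h_xz - h_xw + h_xw' + h_yz + h_yw - h_yw' - h_zw + h_zw'

theorem ceDiff_add {n : ℕ} : ∀ (α β : Form 𝔤 n) (v : Fin (n + 1) → 𝔤),
    ceDiff (α + β) v = ceDiff α v + ceDiff β v := by
  induction n with
  | zero => simp [ceDiff]
  | succ n ih =>
    intro α β v
    simp only [ceDiff, derivationAction_add, AlternatingMap.curryLeft_add, LinearMap.add_apply,
      ih, AlternatingMap.add_apply]
    ring

theorem ceDiff_smul {n : ℕ} (c : ℝ) : ∀ (α : Form 𝔤 n) (v : Fin (n + 1) → 𝔤),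
    ceDiff (c • α) v = c * ceDiff α v := by
  induction n with
  | zero => simp [ceDiff]
  | succ n ih =>
    intro α v
    simp only [ceDiff, derivationAction_smul_right, AlternatingMap.curryLeft_smul,
      LinearMap.smul_apply, ih, AlternatingMap.smul_apply, smul_eq_mul]
    ring

theorem ceDiff_finCongr {m n : ℕ} (h : m = n) (α : Form 𝔤 m) (v : Fin (n + 1) → 𝔤) :
    ceDiff (α.domDomCongr (finCongr h)) v =
      ceDiff α (v ∘ Fin.cast (show m + 1 = n + 1 by rw [h])) := by
  subst h
  rfl

theorem ceDiff_curryLeft {n : ℕ} {α : Form 𝔤 (n + 1)} {α' : Form 𝔤 (n + 2)}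
    (h : ∀ v, ceDiff α v = α' v) (x : 𝔤) (v : Fin (n + 1) → 𝔤) :
    ceDiff (α.curryLeft x) v =
      ((-1 : ℝ) • (derivationAction (LieAlgebra.ad ℝ 𝔤 x) α + α'.curryLeft x)) v := by
  have h_cons := h (Matrix.vecCons x v)
  rw [ceDiff_vecCons] at h_cons
  simp only [AlternatingMap.smul_apply, AlternatingMap.add_apply,
    AlternatingMap.curryLeft_apply_apply, smul_eq_mul, ← h_cons]
  ring

theorem ceDiff_wedge_degree_zero_left {l : ℕ} (f : Form 𝔤 0) {g : Form 𝔤 l} {g' : Form 𝔤 (l + 1)}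
    (hg : ∀ v, ceDiff g v = g' v) (v : Fin (0 + l + 1) → 𝔤) :
    ceDiff (wedge f g) v = wedge f g' v := by
  rw [wedge_degree_zero_left, wedge_degree_zero_left, ceDiff_smul, ceDiff_finCongr, hg]
  rfl

theorem ceDiff_wedge_degree_zero_right {k : ℕ} {f : Form 𝔤 k} {f' : Form 𝔤 (k + 1)}
    (hf : ∀ v, ceDiff f v = f' v) (g : Form 𝔤 0) (v : Fin (k + 1) → 𝔤) :
    ceDiff (wedge f g) v = wedge f' g v := by
  rw [wedge_degree_zero_right, wedge_degree_zero_right]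
  exact (ceDiff_smul _ f v).trans (congrArg _ (hf v))

theorem ceDiff_wedge_vecCons {k l : ℕ} (f : Form 𝔤 (k + 1)) (g : Form 𝔤 (l + 1)) (x : 𝔤)
    (v : Fin (k + 1 + l + 1) → 𝔤) :
    ceDiff (wedge f g) (Matrix.vecCons x v) =
      -(wedge (derivationAction (LieAlgebra.ad ℝ 𝔤 x) f) g v +
          wedge f (derivationAction (LieAlgebra.ad ℝ 𝔤 x) g) v) -
        (ceDiff (wedge (f.curryLeft x) g)
            (v ∘ Fin.cast (show k + (l + 1) + 1 = k + 1 + l + 1 by omega)) +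
          (-1) ^ (k + 1) * ceDiff (wedge f (g.curryLeft x)) v) := by
  have h := ceDiff_vecCons (n := k + 1 + l) (wedge f g :) x v
  rw [derivationAction_wedge, curryLeft_wedge, ceDiff_add, ceDiff_finCongr, ceDiff_smul,
    AlternatingMap.add_apply] at h
  exact h

theorem ceDiff_wedge : ∀ {k l : ℕ} {f : Form 𝔤 k} {f' : Form 𝔤 (k + 1)} {g : Form 𝔤 l}
    {g' : Form 𝔤 (l + 1)} (_ : ∀ v, ceDiff f v = f' v) (_ : ∀ v, ceDiff g v = g' v)
    (v : Fin (k + l + 1) → 𝔤),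
    ceDiff (wedge f g) v =
      wedge f' g (v ∘ Fin.cast (Nat.add_right_comm k 1 l)) + (-1) ^ k * wedge f g' v
  | 0, l, f, f', g, g', hf, hg, v => by
    have h_f' : f' = 0 := AlternatingMap.ext fun w => (hf w).symm
    rw [ceDiff_wedge_degree_zero_left f hg, h_f', wedge_zero_left]
    simp
  | k + 1, 0, f, f', g, g', hf, hg, v => by
    have h_g' : g' = 0 := AlternatingMap.ext fun w => (hg w).symm
    refine (ceDiff_wedge_degree_zero_right hf g v).trans ?_
    rw [h_g', wedge_zero_right]
    simp
  | k + 1, l + 1, f, f', g, g', hf, hg, v => by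
    obtain ⟨x, v, rfl⟩ : ∃ (x : 𝔤) (w : Fin (k + 1 + l + 1) → 𝔤), v = Matrix.vecCons x w :=
      ⟨_, _, (Matrix.cons_head_tail v).symm⟩
    let D {n : ℕ} (α : Form 𝔤 n) : Form 𝔤 n := derivationAction (LieAlgebra.ad ℝ 𝔤 x) α
    have h_left : ceDiff (wedge (f.curryLeft x) g) (v ∘ Fin.cast (by omega)) =
        wedge ((-1 : ℝ) • (D f + f'.curryLeft x)) g v +
          (-1) ^ k * wedge (f.curryLeft x) g' (v ∘ Fin.cast (by omega)) :=
      ceDiff_wedge (ceDiff_curryLeft hf x) hg _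
    have h_right : ceDiff (wedge f (g.curryLeft x)) v =
        wedge f' (g.curryLeft x) (v ∘ Fin.cast (by omega)) +
          (-1) ^ (k + 1) * wedge f ((-1 : ℝ) • (D g + g'.curryLeft x)) v :=
      ceDiff_wedge hf (ceDiff_curryLeft hg x) v
    have h_f' : wedge f' g (Matrix.vecCons x
          (v ∘ Fin.cast (show k + 2 + l = k + 1 + l + 1 by omega))) =
        wedge (f'.curryLeft x) g v +
          (-1) ^ (k + 2) * wedge f' (g.curryLeft x) (v ∘ Fin.cast (by omega)) :=
      wedge_apply_vecCons f' g x _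
    have h_g' := wedge_apply_vecCons f g' x v
    have h_sign : ((-1 : ℝ) ^ (k + 1)) ^ 2 = 1 := by simp [← pow_mul]
    rw [vecCons_comp_cast]
    refine (ceDiff_wedge_vecCons f g x v).trans
      (Eq.trans ?_ (congrArg₂ (· + (-1) ^ (k + 1) * ·) h_f' h_g').symm)
    rw [h_left, h_right]
    simp only [wedge_smul_left, wedge_smul_right, wedge_add_left, wedge_add_right,
      AlternatingMap.add_apply, AlternatingMap.smul_apply, smul_eq_mul]
    linear_combination wedge f (D g) v * h_sign
termination_by k l => k + l

end Leibniz

section Stable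

variable {V : Type*} [AddCommGroup V] [Module ℝ V]

theorem wedge_comm_three_two (f : Form V 3) (g : Form V 2) : wedge f g = wedge g f := by
  ext v
  have h := wedge_comm_apply f g v
  norm_num at h
  exact h

set_option maxRecDepth 4000 in
theorem curryLeft_wedge_three_three (f g : Form V 3) (x : V) :
    (wedge f g).curryLeft x = wedge (f.curryLeft x) g - wedge (g.curryLeft x) f := by
  ext v
  have h := wedge_apply_vecCons (k := 2) (l := 2) f g x v
  rw [Odd.neg_one_pow (by decide : Odd (2 + 1)), neg_one_mul, ← sub_eq_add_neg] at h
  exact h.trans (congrArg (_ - · v) (wedge_comm_three_two f (g.curryLeft x)))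

set_option maxRecDepth 4000 in
theorem apply_apply_of_wedge_eq_smul (hdim : Module.finrank ℝ V = 6) {Ω : Form V 6} (hΩ : Ω ≠ 0)
    {ψ φ : Form V 3} {K : V →ₗ[ℝ] V} (hK : ∀ v, Ω.curryLeft (K v) = wedge (ψ.curryLeft v) ψ)
    (hKΩ : derivationAction K Ω = 0) (hφ : ∀ v, φ.curryLeft v = ψ.curryLeft (K v)) {r : ℝ}
    (hψφ : wedge ψ φ = r • Ω) (v : V) : K (K v) = -(r / 2) • v := by
  have h_Dψ : derivationAction K ψ = (3 : ℝ) • φ := by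
    rw [derivationAction_eq_smul_of_curryLeft hφ]
    norm_num
  have h_Dψv : derivationAction K (ψ.curryLeft v) = (2 : ℝ) • φ.curryLeft v := by
    have h := curryLeft_derivationAction K ψ v
    rw [h_Dψ, ← hφ, AlternatingMap.curryLeft_smul, LinearMap.smul_apply] at h
    linear_combination (norm := module) -h
  have h_DΩ : derivationAction K (wedge (ψ.curryLeft v) ψ) = -Ω.curryLeft (K (K v)) := by
    have h := curryLeft_derivationAction K Ω (K v)
    rw [hKΩ, AlternatingMap.curryLeft_zero] at h
    rw [← hK]
    exact eq_neg_of_add_eq_zero_left h.symm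
  have h_φψ : wedge (φ.curryLeft v) ψ = Ω.curryLeft (K (K v)) := by rw [hφ, hK]
  have h_ψφ : wedge (ψ.curryLeft v) φ = r • Ω.curryLeft v + Ω.curryLeft (K (K v)) := by
    have h : wedge (ψ.curryLeft v) φ - wedge (φ.curryLeft v) ψ = (r • Ω).curryLeft v :=
      (curryLeft_wedge_three_three ψ φ v).symm.trans
        (congrArg (fun A : Form V 6 => A.curryLeft v) hψφ)
    exact (sub_eq_iff_eq_add.1 h).trans (congrArg (_ + ·) h_φψ)
  have h_sum : (2 : ℝ) • Ω.curryLeft (K (K v)) +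
      (3 : ℝ) • (r • Ω.curryLeft v + Ω.curryLeft (K (K v))) = -Ω.curryLeft (K (K v)) := by
    rw [← h_DΩ, derivationAction_wedge, h_Dψv, h_Dψ, wedge_smul_left 2 (φ.curryLeft v) ψ,
      wedge_smul_right 3 (ψ.curryLeft v) φ]
    exact congrArg₂ (fun A B : Form V 5 => (2 : ℝ) • A + (3 : ℝ) • B) h_φψ.symm h_ψφ.symm
  have h_zero : Ω.curryLeft (K (K v) + (r / 2) • v) = 0 := by
    rw [map_add, map_smul]
    linear_combination (norm := module) (1/6 : ℝ) • h_sum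
  rw [neg_smul]
  exact eq_neg_of_add_eq_zero_left (eq_zero_of_curryLeft_eq_zero hdim hΩ h_zero)

end Stable

section AlmostComplex

variable {V : Type*} [AddCommGroup V] [Module ℝ V] {k l : ℕ}

theorem derivationAction_wedge_eq_zero {K : V →ₗ[ℝ] V} {f : Form V k} {g : Form V l}
    (hf : derivationAction K f = 0) (hg : derivationAction K g = 0) :
    derivationAction K (wedge f g) = 0 := by
  rw [derivationAction_wedge, hf, hg, wedge_zero_left, wedge_zero_right, add_zero]

theorem derivationAction_eq_zero_of_symm {K : V →ₗ[ℝ] V} {α : Form V 2}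
    (h : ∀ x y, α ![x, K y] = α ![y, K x]) : derivationAction K α = 0 := by
  ext v
  obtain ⟨x, y, rfl⟩ : ∃ x y, v = ![x, y] := ⟨v 0, v 1, by ext i; fin_cases i <;> rfl⟩
  have h_swap : α ![K x, y] = -α ![y, K x] := apply_vecCons_vecCons_swap α (K x) y ![]
  simp [derivationAction_vecCons, derivationAction_degree_zero, h_swap, h x y]

theorem derivationAction_eq_zero_of_apply_map_eq {J : V →ₗ[ℝ] V} (hJ : ∀ v, J (J v) = -v)
    {α : Form V 2} (h : ∀ x y, α ![J x, J y] = α ![x, y]) : derivationAction J α = 0 := by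
  refine derivationAction_eq_zero_of_symm fun x y => ?_
  have h_swap : α ![J x, y] = -α ![y, J x] := apply_vecCons_vecCons_swap α (J x) y ![]
  have h_neg : α ![-x, J y] = -α ![x, J y] :=
    DFunLike.congr_fun (map_neg α.curryLeft x) ![J y]
  have h_type := h (J x) y
  rw [hJ] at h_type
  linear_combination h_neg - h_swap - h_type

theorem wedge_eq_zero_of_derivationAction (hdim : Module.finrank ℝ V = k + l + 1)
    {J : V →ₗ[ℝ] V} (hJ : ∀ v, J (J v) = -v) {Ω : Form V (k + l + 1)} (hΩ : Ω ≠ 0)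
    (hJΩ : derivationAction J Ω = 0) {α : Form V k} {β γ : Form V l} {a : ℝ} (ha : a ^ 2 ≠ 1)
    (hα : derivationAction J α = 0) (hβ : derivationAction J β = a • γ)
    (hγ : derivationAction J γ = -a • β) : wedge α β = 0 := by
  have h_neg : derivationAction J (derivationAction J (wedge α β)) = -wedge α β :=
    derivationAction_derivationAction hdim hJ hΩ hJΩ _
  have h_sq : derivationAction J (derivationAction J (wedge α β)) = -a ^ 2 • wedge α β := by
    simp only [derivationAction_wedge, hα, hβ, hγ, wedge_zero_left, zero_add, wedge_smul_right,
      derivationAction_smul_right]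
    module
  have h_smul : (a ^ 2 - 1) • wedge α β = 0 := by
    linear_combination (norm := module) h_sq - h_neg
  exact (smul_eq_zero.1 h_smul).resolve_left (sub_ne_zero.2 ha)

set_option maxRecDepth 4000 in
theorem wedge_assoc_two_two_two (f g h : Form V 2) :
    wedge (wedge f g) h = wedge f (wedge g h) := by
  ext v
  exact wedge_assoc_apply f g h v

end AlmostComplex

section SU3

variable {V : Type*} [AddCommGroup V] [Module ℝ V] {ω : Form V 2} {ψp ψm : Form V 3}

theorem curryLeft_eq_neg_curryLeft {J : V →ₗ[ℝ] V}
    (hψm : ∀ x y z, ψm ![x, y, z] = -ψp ![J x, y, z]) (v : V) :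
    ψm.curryLeft v = -ψp.curryLeft (J v) := by
  ext w
  obtain ⟨x, y, rfl⟩ : ∃ x y, w = ![x, y] := ⟨w 0, w 1, by ext i; fin_cases i <;> rfl⟩
  exact hψm v x y

theorem derivationAction_wedge_wedge_eq_zero {J : V →ₗ[ℝ] V}
    (h_symm : ∀ x y, ω ![x, J y] = ω ![y, J x]) :
    derivationAction J (wedge (wedge ω ω) ω) = 0 :=
  have hω := derivationAction_eq_zero_of_symm h_symm
  derivationAction_wedge_eq_zero (derivationAction_wedge_eq_zero hω hω) hω

set_option maxRecDepth 4000 in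
theorem apply_apply_of_isKOf (hdim : Module.finrank ℝ V = 6) (hvol : wedge (wedge ω ω) ω ≠ 0)
    {K : V →ₗ[ℝ] V} (hK : IsKOf ω ψp K)
    (hKω : derivationAction K (wedge (wedge ω ω) ω) = 0) {s : ℝ}
    (hψm : ∀ v, (s • ψm).curryLeft v = ψp.curryLeft (K v))
    (normalized : wedge ψp ψm = (2 / 3 : ℝ) • wedge (wedge ω ω) ω) (v : V) :
    K (K v) = -(2 * s) • v := by
  have hKΩ : derivationAction K ((1 / 6 : ℝ) • wedge (wedge ω ω) ω) = 0 := by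
    rw [derivationAction_smul_right, hKω, smul_zero]
  have h_wedge : wedge ψp (s • ψm) = (4 * s) • ((1 / 6 : ℝ) • wedge (wedge ω ω) ω) := by
    rw [wedge_smul_right, normalized]
    module
  have h_sq : K (K v) = -(4 * s / 2) • v :=
    apply_apply_of_wedge_eq_smul hdim (smul_ne_zero (by norm_num) hvol) hK hKΩ hψm h_wedge v
  rw [h_sq]
  ring_nf

theorem Jof_apply_apply (hdim : Module.finrank ℝ V = 6) (hvol : wedge (wedge ω ω) ω ≠ 0)
    {K : V →ₗ[ℝ] V} (hK : IsKOf ω ψp K) (h_neg : lamOf K < 0)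
    (hψm : ∀ x y z, ψm ![x, y, z] = -ψp ![Jof K x, y, z])
    (h_symm : ∀ x y, ω ![x, Jof K y] = ω ![y, Jof K x])
    (normalized : wedge ψp ψm = (2 / 3 : ℝ) • wedge (wedge ω ω) ω) (v : V) :
    Jof K (Jof K v) = -v := by
  let s := √(-lamOf K)
  have hs : 0 < s := Real.sqrt_pos.2 (neg_pos.2 h_neg)
  have hs_sq : s ^ 2 = -lamOf K := Real.sq_sqrt (neg_pos.2 h_neg).le
  have hJ : Jof K = -s⁻¹ • K := rfl
  have hKJ : K = -s • Jof K := by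
    rw [hJ, smul_smul, neg_mul_neg, mul_inv_cancel₀ hs.ne', one_smul]
  have hKω : derivationAction K (wedge (wedge ω ω) ω) = 0 := by
    rw [hKJ, derivationAction_smul_left, derivationAction_wedge_wedge_eq_zero h_symm, smul_zero]
  have hφ (v : V) : (s • ψm).curryLeft v = ψp.curryLeft (K v) := by
    rw [AlternatingMap.curryLeft_smul, LinearMap.smul_apply, curryLeft_eq_neg_curryLeft hψm,
      smul_neg, ← neg_smul, ← map_smul, ← LinearMap.smul_apply, ← hKJ]
  have hKK (v : V) : K (K v) = -(2 * s) • v :=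
    apply_apply_of_isKOf hdim hvol hK hKω hφ normalized v
  have : FiniteDimensional ℝ V := Module.finite_of_finrank_pos (by omega)
  have h_lam : lamOf K = -(2 * s) := by
    have hKK' : K ∘ₗ K = -(2 * s) • LinearMap.id := LinearMap.ext hKK
    rw [lamOf, hKK', map_smul, LinearMap.trace_id, hdim, smul_eq_mul]
    ring
  have hs_eq : s = 2 := by
    rw [h_lam] at hs_sq
    nlinarith
  rw [hJ, LinearMap.smul_apply, LinearMap.smul_apply, map_smul, hKK, hs_eq]
  module

theorem wedge_eq_zero_of_type11 (hdim : Module.finrank ℝ V = 6)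
    (hvol : wedge (wedge ω ω) ω ≠ 0) {J : V →ₗ[ℝ] V} (hJ : ∀ v, J (J v) = -v)
    (hψm : ∀ x y z, ψm ![x, y, z] = -ψp ![J x, y, z])
    (h_symm : ∀ x y, ω ![x, J y] = ω ![y, J x]) {w : Form V 2}
    (type11 : ∀ x y, w ![J x, J y] = w ![x, y]) : wedge w ψm = 0 := by
  have h_curry := curryLeft_eq_neg_curryLeft hψm
  have hJm : derivationAction J ψm = (3 : ℝ) • ψp := by
    rw [derivationAction_eq_smul_of_curryLeft (φ := ψp) fun v => by
      rw [h_curry, hJ, map_neg, neg_neg]]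
    norm_num
  have hJp : derivationAction J ψp = -(3 : ℝ) • ψm := by
    rw [derivationAction_eq_smul_of_curryLeft (φ := (-1 : ℝ) • ψm) fun v => by
      rw [AlternatingMap.curryLeft_smul, LinearMap.smul_apply, h_curry, neg_one_smul, neg_neg]]
    module
  exact wedge_eq_zero_of_derivationAction hdim hJ hvol
    (derivationAction_wedge_wedge_eq_zero h_symm) (by norm_num)
    (derivationAction_eq_zero_of_apply_map_eq hJ type11) hJm hJp

end SU3

section LieAlgebra

variable {𝔤 : Type*} [LieRing 𝔤] [LieAlgebra ℝ 𝔤]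

set_option maxRecDepth 4000 in
theorem smul_wedge_eq_neg_wedge {w : Form 𝔤 2} {ψ φ : Form 𝔤 3} {χ : Form 𝔤 4} {k : ℝ}
    (h_wedge : wedge w φ = 0) (hw : ∀ x y z, d2 w x y z = k * ψ ![x, y, z])
    (hφ : ∀ x y z t, d3 φ x y z t = χ ![x, y, z, t]) : k • wedge ψ φ = -wedge w χ := by
  have h_dw (v : Fin 3 → 𝔤) : ceDiff w v = (k • ψ) v := by
    obtain ⟨x, y, z, rfl⟩ : ∃ x y z, v = ![x, y, z] :=
      ⟨v 0, v 1, v 2, by ext i; fin_cases i <;> rfl⟩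
    exact (ceDiff_two w x y z).trans (hw x y z)
  have h_dφ (v : Fin 4 → 𝔤) : ceDiff φ v = χ v := by
    obtain ⟨x, y, z, t, rfl⟩ : ∃ x y z t, v = ![x, y, z, t] :=
      ⟨v 0, v 1, v 2, v 3, by ext i; fin_cases i <;> rfl⟩
    exact (ceDiff_three φ x y z t).trans (hφ x y z t)
  ext v
  have h_leibniz : ceDiff (wedge w φ) v = wedge (k • ψ) φ v + (-1) ^ 2 * wedge w χ v :=
    ceDiff_wedge h_dw h_dφ v
  have h_zero : ceDiff (0 : Form 𝔤 5) v = 0 := by simpa using ceDiff_smul 0 (0 : Form 𝔤 5) v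
  rw [h_wedge] at h_leibniz
  have h_sum := h_zero.symm.trans h_leibniz
  rw [wedge_smul_left, AlternatingMap.smul_apply, even_two.neg_one_pow, one_mul] at h_sum
  rw [AlternatingMap.smul_apply, AlternatingMap.neg_apply]
  exact eq_neg_of_add_eq_zero_left h_sum.symm

set_option maxRecDepth 4000 in
theorem statement6_general (hdim : Module.finrank ℝ 𝔤 = 6) {ω w₂ : Form 𝔤 2} {ψp ψm : Form 𝔤 3}
    {J : 𝔤 →ₗ[ℝ] 𝔤} {c k : ℝ} (hvol : wedge (wedge ω ω) ω ≠ 0)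
    (hJ : ∃ K : 𝔤 →ₗ[ℝ] 𝔤, IsKOf ω ψp K ∧ lamOf K < 0 ∧ J = Jof K)
    (hψm : ∀ x y z, ψm ![x, y, z] = -ψp ![J x, y, z])
    (h_symm : ∀ x y, ω ![x, J y] = ω ![y, J x])
    (normalized : wedge ψp ψm = (2 / 3 : ℝ) • wedge (wedge ω ω) ω)
    (hw₂ : IsTorsionForm ω ψp ψm J c w₂) (hdw₂ : ∀ x y z, d2 w₂ x y z = k * ψp ![x, y, z]) :
    wedge (wedge w₂ w₂) ω = ((2 / 3 : ℝ) * k) • wedge (wedge ω ω) ω ∧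
    wedge (wedge w₂ w₂) ω = (4 * k) • ((1 / 6 : ℝ) • wedge (wedge ω ω) ω) := by
  obtain ⟨K, hK, h_neg, rfl⟩ := hJ
  have hJJ := Jof_apply_apply hdim hvol hK h_neg hψm h_symm normalized
  have h_wedge : wedge w₂ ψm = 0 := wedge_eq_zero_of_type11 hdim hvol hJJ hψm h_symm hw₂.type11
  let χ : Form 𝔤 4 := (-(2 / 3 : ℝ) * c) • wedge ω ω - wedge w₂ ω
  have h_leibniz : k • wedge ψp ψm = -wedge w₂ χ :=
    smul_wedge_eq_neg_wedge h_wedge hdw₂ hw₂.dψm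
  have h_χ : wedge w₂ χ = -wedge (wedge w₂ w₂) ω := by
    simp only [χ]
    rw [sub_eq_add_neg, ← neg_one_smul ℝ (wedge w₂ ω), wedge_add_right, wedge_smul_right,
      wedge_smul_right, ← wedge_assoc_two_two_two, ← wedge_assoc_two_two_two, hw₂.primitive]
    module
  have h_main : wedge (wedge w₂ w₂) ω = ((2 / 3 : ℝ) * k) • wedge (wedge ω ω) ω := by
    rw [h_χ, neg_neg, normalized] at h_leibniz
    rw [← h_leibniz, smul_smul, mul_comm]
  refine ⟨h_main, h_main.trans ?_⟩
  module

end LieAlgebra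

/-- Let `(ω, ψ₊)` be a coupled SU(3)-structure on a 6-dimensional real
Lie algebra `𝔤` with coupled constant `c` and torsion form `w₂`. If `d w₂ = k ψ₊` for some
`k ∈ ℝ`, then `w₂ ∧ w₂ ∧ ω = (2/3) k ω³`; equivalently `w₂ ∧ w₂ ∧ ω = 4k Ω` with
`Ω = (1/6) ω³`. -/
theorem statement6 {𝔤 : Type*} [LieRing 𝔤] [LieAlgebra ℝ 𝔤] [FiniteDimensional ℝ 𝔤]
    (hdim : Module.finrank ℝ 𝔤 = 6)
    (ω : Form 𝔤 2) (ψp ψm : Form 𝔤 3) (J : 𝔤 →ₗ[ℝ] 𝔤) (c : ℝ)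
    (hcoupled : IsCoupledSU3 ω ψp ψm J c)
    (w₂ : Form 𝔤 2) (hw₂ : IsTorsionForm ω ψp ψm J c w₂)
    (k : ℝ) (hdw₂ : ∀ x y z : 𝔤, d2 w₂ x y z = k * ψp ![x, y, z]) :
    wedge (wedge w₂ w₂) ω = ((2 / 3 : ℝ) * k) • wedge (wedge ω ω) ω ∧
    wedge (wedge w₂ w₂) ω = (4 * k) • ((1 / 6 : ℝ) • wedge (wedge ω ω) ω) :=
  statement6_general hdim hcoupled.toIsSU3.vol_ne hcoupled.toIsSU3.hJ hcoupled.toIsSU3.hψm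
    hcoupled.toIsSU3.h_symm hcoupled.toIsSU3.normalized hw₂ hdw₂
end
end

section
/- Let e¹,…,e⁶ be the dual basis of the standard basis e₁,…,e₆ of ℝ⁶, let ω₀ := e¹²+e³⁴+e⁵⁶, and let J₀ be the endomorphism of ℝ⁶ with J₀e₁ = e₂, J₀e₂ = −e₁, J₀e₃ = e₄, J₀e₄ = −e₃, J₀e₅ = e₆, J₀e₆ = −e₅. If a 2-form w on ℝ⁶ is of type (1,1), i.e. w(J₀x, J₀y) = w(x,y) for all x,y, and primitive, i.e. w∧ω₀∧ω₀ = 0, then w∧w∧ω₀ = −|w|²·e¹²³⁴⁵⁶, where |w|² := Σ_{1≤i<j≤6} w(e_i,e_j)². In particular w∧w∧ω₀ is a nonpositive multiple of the volume form e¹²³⁴⁵⁶, vanishing if and only if w = 0. -/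
noncomputable section

open scoped TensorProduct

section VecEval
variable {α : Type*} (a b c d e f : α)
lemma vmk0 : ![a, b, c, d, e, f] ⟨0, by omega⟩ = a := rfl
lemma vmk1 : ![a, b, c, d, e, f] ⟨1, by omega⟩ = b := rfl
lemma vmk2 : ![a, b, c, d, e, f] ⟨2, by omega⟩ = c := rfl
lemma vmk3 : ![a, b, c, d, e, f] ⟨3, by omega⟩ = d := rfl
lemma vmk4 : ![a, b, c, d, e, f] ⟨4, by omega⟩ = e := rfl
lemma vmk5 : ![a, b, c, d, e, f] ⟨5, by omega⟩ = f := rfl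
end VecEval

/-- The dual basis 1-forms `e^i` on `ℝ⁶ = Fin 6 → ℝ`. -/
def pE (i : Fin 6) : Form (Fin 6 → ℝ) 1 :=
  AlternatingMap.ofSubsingleton ℝ (Fin 6 → ℝ) ℝ (0 : Fin 1) (LinearMap.proj i)

/-- The 2-forms `e^{ij} = e^i ∧ e^j` on `ℝ⁶`. -/
def pE2 (i j : Fin 6) : Form (Fin 6 → ℝ) 2 := wedge (pE i) (pE j)

/-- `ω₀ = e¹² + e³⁴ + e⁵⁶` on `ℝ⁶`. -/
def pOm0 : Form (Fin 6 → ℝ) 2 := pE2 0 1 + pE2 2 3 + pE2 4 5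

/-- The volume form `e¹²³⁴⁵⁶` on `ℝ⁶`. -/
def pVol : Form (Fin 6 → ℝ) 6 :=
  wedge (wedge (wedge (wedge (wedge (pE 0) (pE 1)) (pE 2)) (pE 3)) (pE 4)) (pE 5)

/-- The standard almost complex structure `J₀` on `ℝ⁶`:
`J₀e₁ = e₂, J₀e₂ = −e₁, J₀e₃ = e₄, J₀e₄ = −e₃, J₀e₅ = e₆, J₀e₆ = −e₅`. -/
def J0 : (Fin 6 → ℝ) →ₗ[ℝ] (Fin 6 → ℝ) where
  toFun x := ![-x 1, x 0, -x 3, x 2, -x 5, x 4]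
  map_add' a b := by
    funext i
    fin_cases i <;>
      simp only [Pi.add_apply, vmk0, vmk1, vmk2, vmk3, vmk4, vmk5] <;> ring
  map_smul' t a := by
    funext i
    fin_cases i <;>
      simp only [Pi.smul_apply, smul_eq_mul, RingHom.id_apply, vmk0, vmk1, vmk2,
        vmk3, vmk4, vmk5] <;> ring

/-- `|w|² = Σ_{i<j} w(e_i, e_j)²`, computed on the standard basis of `ℝ⁶`. -/
def wNormSq (w : Form (Fin 6 → ℝ) 2) : ℝ :=
  ∑ i : Fin 6, ∑ j : Fin 6,
    if i < j then (w ![Pi.single i 1, Pi.single j 1]) ^ 2 else 0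

/-!
The defining sum of `f ∧ g` runs over cosets of block-preserving permutations, and a coset is
determined by which arguments are fed to `g`. Since `ω₀` pairs only `e₁e₂`, `e₃e₄` and `e₅e₆`, the
value of `f ∧ ω₀` on the frame is the sum of the values of `f` on the three pairs of
complementary complex lines. Writing `Λw = w(e₁, e₂) + w(e₃, e₄) + w(e₅, e₆)`, this gives
`w ∧ ω₀ ∧ ω₀ = 2 Λw e¹²³⁴⁵⁶`. If `w` is of type (1,1), then
`(w ∧ w)(x, Jx, y, Jy) = 2 (w(x, Jx) w(y, Jy) - w(x, y)² - w(x, Jy)²)`, and summing over the pairs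
of coordinate complex lines gives `w ∧ w ∧ ω₀ = ((Λw)² - |w|²) e¹²³⁴⁵⁶`; primitivity says that
`Λw = 0`.
-/

section Wedge

variable {V : Type*} [AddCommGroup V] [Module ℝ V] {k l : ℕ}

open Equiv

/-- The class of `σ` modulo the permutations that preserve the first `k` and the last `l` indices:
an index of the sum that defines `wedge`, transported from `Fin k ⊕ Fin l` to `Fin (k + l)`. -/
def shuffleCoset (σ : Perm (Fin (k + l))) : Perm.ModSumCongr (Fin k) (Fin l) :=
  Quotient.mk'' (finSumFinEquiv.symm.permCongr σ)

/-- The set of values of `σ` on the last `l` indices, which determines `shuffleCoset σ`. -/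
def lastBlock (k l : ℕ) (σ : Perm (Fin (k + l))) : Finset (Fin (k + l)) :=
  Finset.univ.image fun a : Fin l => σ (Fin.natAdd k a)

/-- The contribution of `σ` to `wedge f g v`; it depends only on `shuffleCoset σ`. -/
def shuffleTerm (f : Form V k) (g : Form V l) (v : Fin (k + l) → V) (σ : Perm (Fin (k + l))) : ℝ :=
  (Perm.sign σ : ℤ) *
    (f (fun a => v (σ (Fin.castAdd l a))) * g (fun a => v (σ (Fin.natAdd k a))))

lemma shuffleCoset_surjective :
    Function.Surjective (shuffleCoset : Perm (Fin (k + l)) → Perm.ModSumCongr (Fin k) (Fin l)) :=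
  Quotient.mk''_surjective.comp (finSumFinEquiv.symm.permCongr).surjective

lemma mem_range_sumCongrHom_iff {m n : Type*} [Finite m] [Finite n] {σ : Perm (m ⊕ n)} :
    σ ∈ (Perm.sumCongrHom m n).range ↔
      Set.MapsTo σ (Set.range Sum.inr) (Set.range Sum.inr) := by
  refine ⟨?_, fun h => Perm.mem_sumCongrHom_range_of_perm_mapsTo_inl
    ((Perm.perm_mapsTo_inl_iff_mapsTo_inr σ).2 h)⟩
  rintro ⟨⟨σ₁, σ₂⟩, rfl⟩ _ ⟨b, rfl⟩
  exact ⟨σ₂ b, rfl⟩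

lemma card_lastBlock (σ : Perm (Fin (k + l))) : (lastBlock k l σ).card = l := by
  rw [lastBlock, Finset.card_image_of_injective _ fun a b h =>
    Fin.natAdd_injective l k (σ.injective h), Finset.card_fin]

lemma shuffleCoset_eq_iff {σ τ : Perm (Fin (k + l))} :
    shuffleCoset σ = shuffleCoset τ ↔ lastBlock k l τ = lastBlock k l σ := by
  have subset_iff_eq : lastBlock k l τ ⊆ lastBlock k l σ ↔ lastBlock k l τ = lastBlock k l σ :=
    ⟨fun h => Finset.eq_of_subset_of_card_le h (by simp only [card_lastBlock, le_refl]),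
      fun h => h.subset⟩
  rw [← subset_iff_eq, shuffleCoset, shuffleCoset, Quotient.eq'', QuotientGroup.leftRel_apply,
    mem_range_sumCongrHom_iff, Set.mapsTo_range_iff, lastBlock, lastBlock,
    Finset.image_subset_iff]
  simp only [Perm.mul_apply, Set.mem_range, Perm.eq_inv_iff_eq, Equiv.permCongr_apply,
    Equiv.symm_symm, finSumFinEquiv_apply_right, EmbeddingLike.apply_eq_iff_eq, Finset.mem_image,
    Finset.mem_univ, true_and, forall_const]

lemma lid_summand_shuffleCoset (f : Form V k) (g : Form V l) (v : Fin (k + l) → V)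
    (σ : Perm (Fin (k + l))) :
    TensorProduct.lid ℝ ℝ (AlternatingMap.domCoprod.summand f g (shuffleCoset σ)
      (v ∘ finSumFinEquiv)) = shuffleTerm f g v σ := by
  rw [shuffleCoset, AlternatingMap.domCoprod.summand_mk'', smul_apply,
    MultilinearMap.domDomCongr_apply, MultilinearMap.domCoprod_apply, shuffleTerm,
    Units.smul_def, ← Int.cast_smul_eq_zsmul ℝ, map_smul]
  simp [Equiv.permCongr_apply, Perm.sign_permCongr]

lemma shuffleTerm_eq_etaExpand (f : Form V k) (g : Form V l) (v : Fin (k + l) → V)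
    (σ : Perm (Fin (k + l))) :
    shuffleTerm f g v σ = (Perm.sign σ : ℤ) *
      (f (FinVec.etaExpand fun a => v (σ (Fin.castAdd l a))) *
        g (FinVec.etaExpand fun a => v (σ (Fin.natAdd k a)))) := by
  rw [shuffleTerm, FinVec.etaExpand_eq, FinVec.etaExpand_eq]

theorem wedge_apply_eq_sum_shuffleTerm {ι : Type*} [Fintype ι] (f : Form V k) (g : Form V l)
    (v : Fin (k + l) → V) (s : ι → Perm (Fin (k + l)))
    (hs : Function.Injective fun i => lastBlock k l (s i))
    (hsupp : ∀ τ, shuffleTerm f g v τ ≠ 0 → ∃ i, lastBlock k l (s i) = lastBlock k l τ) :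
    wedge f g v = ∑ i, shuffleTerm f g v (s i) := by
  have wedge_eq : wedge f g v = ∑ c : Perm.ModSumCongr (Fin k) (Fin l),
      TensorProduct.lid ℝ ℝ (AlternatingMap.domCoprod.summand f g c (v ∘ finSumFinEquiv)) := by
    rw [wedge, AlternatingMap.domDomCongr_apply, LinearMap.compAlternatingMap_apply,
      AlternatingMap.domCoprod_apply, sum_apply, map_sum]
    rfl
  rw [wedge_eq]
  refine (Fintype.sum_of_injective (fun i => shuffleCoset (s i)) ?_ _ _ ?_ ?_).symm
  · exact fun i j hij => hs (shuffleCoset_eq_iff.1 hij).symm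
  · intro c hc
    obtain ⟨τ, rfl⟩ := shuffleCoset_surjective c
    rw [lid_summand_shuffleCoset]
    by_contra hτ
    obtain ⟨i, hi⟩ := hsupp τ hτ
    exact hc ⟨i, (shuffleCoset_eq_iff.2 hi).symm⟩
  · exact fun i => (lid_summand_shuffleCoset f g v (s i)).symm

lemma wedge_one_one_apply (f g : Form V 1) (x y : V) :
    wedge f g ![x, y] = f ![x] * g ![y] - f ![y] * g ![x] := by
  have term (σ : Perm (Fin (1 + 1))) : shuffleTerm f g ![x, y] σ =
      (Perm.sign σ : ℤ) * (f ![![x, y] (σ 0)] * g ![![x, y] (σ 1)]) :=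
    shuffleTerm_eq_etaExpand f g ![x, y] σ
  have exhaustive : ∀ τ, ∃ i, lastBlock 1 1 (![1, swap 0 1] i) = lastBlock 1 1 τ := by decide
  rw [wedge_apply_eq_sum_shuffleTerm f g ![x, y] ![1, swap 0 1] (by decide)
    (fun τ _ => exhaustive τ), Fin.sum_univ_two]
  simp [term, sub_eq_add_neg]

lemma wedge_one_right_apply_of_eq_zero (f : Form V k) (g : Form V 1) (v : Fin (k + 1) → V)
    (hg : ∀ i : Fin k, g ![v i.castSucc] = 0) :
    wedge f g v = f (fun i => v i.castSucc) * g ![v (Fin.last k)] := by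
  have term (σ : Perm (Fin (k + 1))) : shuffleTerm f g v σ =
      (Perm.sign σ : ℤ) * (f (fun i => v (σ i.castSucc)) * g ![v (σ (Fin.last k))]) := by
    rw [shuffleTerm, ← FinVec.etaExpand_eq fun a => v (σ (Fin.natAdd k a))]
    rfl
  rw [wedge_apply_eq_sum_shuffleTerm f g v (fun _ : Unit => 1) (fun _ _ _ => rfl)]
  · simp [term]
  · intro τ hτ
    have hlast : τ (Fin.last k) = Fin.last k := by
      rcases Fin.eq_castSucc_or_eq_last (τ (Fin.last k)) with ⟨i, hi⟩ | h
      · simp [term, hi, hg] at hτ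
      · exact h
    refine ⟨(), ?_⟩
    ext i
    simp [lastBlock, show Fin.natAdd k (0 : Fin 1) = Fin.last k from rfl, hlast]

lemma form_two_apply_swap (w : Form V 2) (x y : V) : w ![y, x] = -w ![x, y] := by
  rw [← w.map_swap ![x, y] (show (0 : Fin 2) ≠ 1 by decide)]
  congr 1
  ext i
  fin_cases i <;> rfl

lemma wedge_two_two_apply (f g : Form V 2) (a b c d : V) :
    wedge f g ![a, b, c, d] =
      f ![a, b] * g ![c, d] - f ![a, c] * g ![b, d] + f ![a, d] * g ![b, c] +
      f ![b, c] * g ![a, d] - f ![b, d] * g ![a, c] + f ![c, d] * g ![a, b] := by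
  set v := ![a, b, c, d]
  have term (σ : Perm (Fin (2 + 2))) : shuffleTerm f g v σ =
      (Perm.sign σ : ℤ) * (f ![v (σ 0), v (σ 1)] * g ![v (σ 2), v (σ 3)]) :=
    shuffleTerm_eq_etaExpand f g v σ
  let s : Fin 6 → Perm (Fin (2 + 2)) :=
    ![1, swap 1 2, swap 1 3, swap 0 2, swap 0 3, swap 0 2 * swap 1 3]
  have exhaustive : ∀ τ, ∃ i, lastBlock 2 2 (s i) = lastBlock 2 2 τ := by decide
  rw [wedge_apply_eq_sum_shuffleTerm f g v s (by decide) (fun τ _ => exhaustive τ)]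
  simp only [term, s, v, Fin.sum_univ_six, Matrix.cons_val, Perm.sign_one, Perm.sign_swap',
    Perm.sign_mul, Perm.coe_one, Perm.coe_mul, Function.comp_apply, id_eq, swap_apply_def,
    Fin.isValue, Fin.reduceEq, ↓reduceIte, form_two_apply_swap _ a c,
    form_two_apply_swap _ b c, form_two_apply_swap _ b d]
  push_cast
  ring

end Wedge

section TypeOneOne

variable {V : Type*} [AddCommGroup V] [Module ℝ V] {J : V → V} {α β : Form V 2}

/-- A 2-form is of type (1,1) with respect to an almost complex structure `J` if it is
`J`-invariant; the definition makes sense for an arbitrary map `J`. -/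
def IsTypeOneOne (J : V → V) (α : Form V 2) : Prop :=
  ∀ x y, α ![J x, J y] = α ![x, y]

lemma IsTypeOneOne.apply_left_eq_neg (hα : IsTypeOneOne J α) (hJ : ∀ x, J (J x) = -x) (x y : V) :
    α ![J x, y] = -α ![x, J y] := by
  rw [← hα, hJ, ← neg_one_smul ℝ x, α.map_vecCons_smul, neg_one_smul]

lemma IsTypeOneOne.wedge_apply (hα : IsTypeOneOne J α) (hβ : IsTypeOneOne J β)
    (hJ : ∀ x, J (J x) = -x) (x y : V) :
    wedge α β ![x, J x, y, J y] = α ![x, J x] * β ![y, J y] + α ![y, J y] * β ![x, J x] -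
      2 * (α ![x, y] * β ![x, y] + α ![x, J y] * β ![x, J y]) := by
  rw [wedge_two_two_apply, hα, hβ, hα.apply_left_eq_neg hJ, hβ.apply_left_eq_neg hJ]
  ring

end TypeOneOne

lemma pE_apply (i : Fin 6) (x : Fin 6 → ℝ) : pE i ![x] = x i := rfl

lemma pE2_apply (i j : Fin 6) (x y : Fin 6 → ℝ) : pE2 i j ![x, y] = x i * y j - y i * x j :=
  wedge_one_one_apply (pE i) (pE j) x y

lemma pOm0_apply (x y : Fin 6 → ℝ) :
    pOm0 ![x, y] =
      x 0 * y 1 - y 0 * x 1 + (x 2 * y 3 - y 2 * x 3) + (x 4 * y 5 - y 4 * x 5) := by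
  simp only [pOm0, AlternatingMap.add_apply, pE2_apply]

lemma J0_apply (x : Fin 6 → ℝ) : J0 x = ![-x 1, x 0, -x 3, x 2, -x 5, x 4] := rfl

lemma J0_J0 (x : Fin 6 → ℝ) : J0 (J0 x) = -x := by
  ext i
  fin_cases i <;> simp [J0_apply]

/-- The standard basis vector of `ℝ⁶` with index `i`, counted from `0`; it is written with
`Pi.single` so as to agree with `wNormSq` definitionally. -/
abbrev stdVec (i : Fin 6) : Fin 6 → ℝ := Pi.single i 1

lemma J0_stdVec_zero : J0 (stdVec 0) = stdVec 1 := by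
  ext i
  fin_cases i <;> simp [J0_apply]

lemma J0_stdVec_two : J0 (stdVec 2) = stdVec 3 := by
  ext i
  fin_cases i <;> simp [J0_apply]

lemma J0_stdVec_four : J0 (stdVec 4) = stdVec 5 := by
  ext i
  fin_cases i <;> simp [J0_apply]

lemma wedge_pE_apply_stdVec {k : ℕ} (hk : k < 6) (f : Form (Fin 6 → ℝ) k) :
    wedge f (pE ⟨k, hk⟩) (fun i => stdVec (Fin.castLE hk i)) =
      f (fun i => stdVec (Fin.castLE hk.le i)) := by
  rw [wedge_one_right_apply_of_eq_zero f _ _ fun i => ?_]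
  · simp [pE_apply, Pi.single_apply, Fin.ext_iff]
  · simp [pE_apply, Fin.ext_iff, i.isLt.ne']

lemma pVol_stdVec : pVol stdVec = 1 :=
  calc pVol stdVec
    _ = pE 0 ![stdVec 0] :=
      (wedge_pE_apply_stdVec (k := 5) (by decide) _).trans <|
      (wedge_pE_apply_stdVec (k := 4) (by decide) _).trans <|
      (wedge_pE_apply_stdVec (k := 3) (by decide) _).trans <|
      (wedge_pE_apply_stdVec (k := 2) (by decide) _).trans <|
      wedge_pE_apply_stdVec (k := 1) (by decide) (pE 0)
    _ = 1 := by simp [pE_apply]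

lemma pVol_ne_zero : pVol ≠ 0 := fun h => by
  simpa [h] using pVol_stdVec

lemma eq_smul_pVol (f : Form (Fin 6 → ℝ) 6) : f = f stdVec • pVol := by
  have coe_basisFun : ⇑(Pi.basisFun ℝ (Fin 6)) = stdVec := by
    ext i : 1
    exact Pi.basisFun_apply ℝ (Fin 6) i
  have eq_smul_det (g : Form (Fin 6 → ℝ) 6) :
      g = g stdVec • (Pi.basisFun ℝ (Fin 6)).det := by
    simpa only [coe_basisFun] using g.eq_smul_basis_det (Pi.basisFun ℝ (Fin 6))
  rw [eq_smul_det pVol, pVol_stdVec, one_smul]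
  exact eq_smul_det f

lemma pOm0_stdVec_ne_zero {i j : Fin 6} (h : pOm0 ![stdVec i, stdVec j] ≠ 0) :
    ({i, j} : Finset (Fin 6)) ∈ ({{0, 1}, {2, 3}, {4, 5}} : Finset (Finset (Fin 6))) := by
  contrapose! h
  rw [pOm0_apply]
  fin_cases i <;> fin_cases j <;> first | exact absurd (by decide) h | simp

open Equiv in
lemma wedge_pOm0_apply_stdVec (f : Form (Fin 6 → ℝ) 4) :
    wedge f pOm0 stdVec = f ![stdVec 2, stdVec 3, stdVec 4, stdVec 5] +
      f ![stdVec 0, stdVec 1, stdVec 4, stdVec 5] +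
      f ![stdVec 0, stdVec 1, stdVec 2, stdVec 3] := by
  have term (σ : Perm (Fin 6)) : shuffleTerm f pOm0 stdVec σ = (Perm.sign σ : ℤ) *
      (f ![stdVec (σ 0), stdVec (σ 1), stdVec (σ 2), stdVec (σ 3)] *
        pOm0 ![stdVec (σ 4), stdVec (σ 5)]) :=
    shuffleTerm_eq_etaExpand f pOm0 stdVec σ
  let s : Fin 3 → Perm (Fin 6) := ![finRotate 6 ^ 2, swap 2 4 * swap 3 5, 1]
  have coe_rotate : ⇑(s 0) = ![2, 3, 4, 5, 0, 1] := by decide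
  have coe_swap : ⇑(s 1) = ![0, 1, 4, 5, 2, 3] := by decide
  have coe_one : ⇑(s 2) = ![0, 1, 2, 3, 4, 5] := by decide
  have sign_s : ∀ i, Perm.sign (s i) = 1 := by decide
  have covered : ∀ i j : Fin 6, ({i, j} : Finset (Fin 6)) ∈
      ({{0, 1}, {2, 3}, {4, 5}} : Finset (Finset (Fin 6))) →
        ∃ p, lastBlock 4 2 (s p) = {i, j} := by decide
  rw [wedge_apply_eq_sum_shuffleTerm f pOm0 stdVec s (by decide)]
  · simp [Fin.sum_univ_three, term, sign_s, pOm0_apply, coe_rotate, coe_swap, coe_one]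
  · intro τ hτ
    have lastBlock_eq : lastBlock 4 2 τ = {τ 4, τ 5} := by
      ext
      simp [lastBlock, eq_comm]
    rw [term] at hτ
    rw [lastBlock_eq]
    exact covered _ _ (pOm0_stdVec_ne_zero (right_ne_zero_of_mul (right_ne_zero_of_mul hτ)))

/-- The contraction `Λw` of a 2-form `w` on `ℝ⁶` with `ω₀`. -/
def omegaTrace (w : Form (Fin 6 → ℝ) 2) : ℝ :=
  w ![stdVec 0, stdVec 1] + w ![stdVec 2, stdVec 3] + w ![stdVec 4, stdVec 5]

lemma wNormSq_nonneg (w : Form (Fin 6 → ℝ) 2) : 0 ≤ wNormSq w :=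
  Finset.sum_nonneg fun i _ => Finset.sum_nonneg fun j _ => by positivity

lemma form_two_eq_zero_of_stdVec {w : Form (Fin 6 → ℝ) 2}
    (h : ∀ i j, i < j → w ![stdVec i, stdVec j] = 0) : w = 0 := by
  refine Module.Basis.ext_alternating (Pi.basisFun ℝ (Fin 6)) fun v hv => ?_
  have basis_pair : (fun i => Pi.basisFun ℝ (Fin 6) (v i)) = ![stdVec (v 0), stdVec (v 1)] := by
    ext i
    fin_cases i <;> simp
  rw [basis_pair, AlternatingMap.zero_apply]
  rcases lt_or_gt_of_ne (hv.ne zero_ne_one) with hlt | hgt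
  · exact h _ _ hlt
  · rw [form_two_apply_swap, h _ _ hgt, neg_zero]

lemma wNormSq_eq_zero_iff {w : Form (Fin 6 → ℝ) 2} : wNormSq w = 0 ↔ w = 0 := by
  refine ⟨fun h => form_two_eq_zero_of_stdVec fun i j hij => ?_, fun h => by simp [h, wNormSq]⟩
  have row_zero := (Finset.sum_eq_zero_iff_of_nonneg fun i _ =>
    Finset.sum_nonneg fun j _ => by positivity).1 h i (Finset.mem_univ i)
  have entry_zero := (Finset.sum_eq_zero_iff_of_nonneg fun j _ => by positivity).1 row_zero j
    (Finset.mem_univ j)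
  rw [if_pos hij] at entry_zero
  exact pow_eq_zero_iff two_ne_zero |>.1 entry_zero

lemma IsTypeOneOne.wNormSq_eq {w : Form (Fin 6 → ℝ) 2} (hw : IsTypeOneOne J0 w) :
    wNormSq w =
      w ![stdVec 0, stdVec 1] ^ 2 + w ![stdVec 2, stdVec 3] ^ 2 + w ![stdVec 4, stdVec 5] ^ 2 +
      2 * (w ![stdVec 0, stdVec 2] ^ 2 + w ![stdVec 0, stdVec 3] ^ 2 +
        w ![stdVec 0, stdVec 4] ^ 2 + w ![stdVec 0, stdVec 5] ^ 2 +
        w ![stdVec 2, stdVec 4] ^ 2 + w ![stdVec 2, stdVec 5] ^ 2) := by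
  have expand : wNormSq w = ∑ i : Fin 6, ∑ j : Fin 6,
      if i < j then w ![stdVec i, stdVec j] ^ 2 else 0 := rfl
  rw [expand]
  simp only [Fin.sum_univ_six]
  simp (decide := true) only [if_true, if_false]
  rw [← J0_stdVec_zero, ← J0_stdVec_two, ← J0_stdVec_four]
  simp only [hw _ _, hw.apply_left_eq_neg J0_J0]
  ring

theorem wedge_pOm0_pOm0_eq_smul_pVol (w : Form (Fin 6 → ℝ) 2) :
    wedge (wedge w pOm0) pOm0 = (2 * omegaTrace w) • pVol := by
  refine (eq_smul_pVol _).trans (congrArg (· • pVol) ?_)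
  rw [wedge_pOm0_apply_stdVec]
  simp only [wedge_two_two_apply, pOm0_apply, omegaTrace, ne_eq, Fin.isValue, Fin.reduceEq,
    not_false_eq_true, Pi.single_eq_of_ne, Pi.single_eq_same]
  ring

theorem IsTypeOneOne.wedge_self_pOm0 {w : Form (Fin 6 → ℝ) 2} (hw : IsTypeOneOne J0 w) :
    wedge (wedge w w) pOm0 = (omegaTrace w ^ 2 - wNormSq w) • pVol := by
  refine (eq_smul_pVol _).trans (congrArg (· • pVol) ?_)
  rw [wedge_pOm0_apply_stdVec, hw.wNormSq_eq, omegaTrace, ← J0_stdVec_zero,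
    ← J0_stdVec_two, ← J0_stdVec_four]
  simp only [hw.wedge_apply hw J0_J0]
  ring

/-- If a 2-form `w` on `ℝ⁶` is of type (1,1) with respect to `J₀`
(`w(J₀x, J₀y) = w(x,y)`) and primitive (`w ∧ ω₀ ∧ ω₀ = 0`), then
`w ∧ w ∧ ω₀ = −|w|² e¹²³⁴⁵⁶`; in particular `w ∧ w ∧ ω₀` is a nonpositive multiple of the
volume form, vanishing if and only if `w = 0`. -/
theorem statement8 (w : Form (Fin 6 → ℝ) 2)
    (h11 : ∀ x y : Fin 6 → ℝ, w ![J0 x, J0 y] = w ![x, y])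
    (hprim : wedge (wedge w pOm0) pOm0 = 0) :
    wedge (wedge w w) pOm0 = (-(wNormSq w)) • pVol ∧
    -(wNormSq w) ≤ 0 ∧
    (wedge (wedge w w) pOm0 = 0 ↔ w = 0) := by
  have hform : wedge (wedge w w) pOm0 = (-(wNormSq w)) • pVol := by
    have htrace : omegaTrace w = 0 := by
      simpa [wedge_pOm0_pOm0_eq_smul_pVol, pVol_ne_zero] using hprim
    rw [IsTypeOneOne.wedge_self_pOm0 h11, htrace, sq, mul_zero, zero_sub]
  refine ⟨hform, neg_nonpos.2 (wNormSq_nonneg w), ?_⟩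
  rw [hform, smul_eq_zero_iff_left pVol_ne_zero, neg_eq_zero, wNormSq_eq_zero_iff]
end
end
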